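/- The limit as n → ∞ of β_n / (n+1)! equals 1 - 2/e, where β_n is the sum of the smallest fixed points over all permutations of [n] with at least one fixed point. -/

import Mathlib

open Classical

noncomputable section

/-- `π` has at least one fixed point. -/
def hasFP {n : ℕ} (π : Equiv.Perm (Fin n)) : Prop := ∃ i, π i = i

/-- The set of (1-based) values of the fixed points of `π`, viewing a permutation of
`Fin n` as a permutation of `[n] = {1, …, n}` via `i ↦ i + 1`. -/
def fixVals {n : ℕ} (π : Equiv.Perm (Fin n)) : Set ℕ :=
  {k | ∃ i : Fin n, π i = i ∧ (i : ℕ) + 1 = k}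

/-- The largest fixed point `ℓ(π)` (in 1-based indexing). -/
def lfp {n : ℕ} (π : Equiv.Perm (Fin n)) : ℕ := sSup (fixVals π)

/-- The smallest fixed point `s(π)` (in 1-based indexing). -/
def sfp {n : ℕ} (π : Equiv.Perm (Fin n)) : ℕ := sInf (fixVals π)

/-- `d n` is the number of derangements of `[n]`. -/
def d (n : ℕ) : ℕ := Set.ncard {π : Equiv.Perm (Fin n) | ∀ i, π i ≠ i}

/-- `a n k` is the number of permutations of `[n]` with at least one fixed point
whose largest fixed point equals `k`. -/
def a (n k : ℕ) : ℕ := Set.ncard {π : Equiv.Perm (Fin n) | hasFP π ∧ lfp π = k}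

/-- `b n k` is the number of permutations of `[n]` with at least one fixed point
whose smallest fixed point equals `k`. -/
def b (n k : ℕ) : ℕ := Set.ncard {π : Equiv.Perm (Fin n) | hasFP π ∧ sfp π = k}

/-- `alpha n` is the sum of the largest fixed points over all non-derangements of `[n]`. -/
def alpha (n : ℕ) : ℕ :=
  ∑ π ∈ Finset.univ.filter (fun π : Equiv.Perm (Fin n) => hasFP π), lfp π

/-- `beta n` is the sum of the smallest fixed points over all non-derangements of `[n]`. -/
def beta (n : ℕ) : ℕ :=
  ∑ π ∈ Finset.univ.filter (fun π : Equiv.Perm (Fin n) => hasFP π), sfp π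

/-!
Deleting the smallest fixed point `k` of a permutation of `[n + 1]` leaves a permutation `τ` of
`[n]` all of whose fixed points are at least `k`, and every such pair `(k, τ)` arises exactly once.
A given `τ` admits `s(τ)` values of `k` if it has a fixed point, and all `n + 1` values if it is a
derangement. Hence `(n + 1)! = β_n + (n + 1) d_n + d_{n + 1}`, where `d_n` counts the derangements
of `[n]`, and the limit follows from `d_n / n! → 1 / e`.
-/

open Equiv Function

section InsertFixedPoint

variable {n : ℕ}

/-- Insertion of a fixed point: `insertFixedPoint k τ` permutes `Fin (n + 1)`, fixes `k`, and acts
as `τ` on the other points, which are identified with `Fin n` by the increasing map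
`k.succAbove`. -/
def insertFixedPoint (k : Fin (n + 1)) (τ : Perm (Fin n)) : Perm (Fin (n + 1)) :=
  (finSuccEquiv' k).symm.permCongr τ.optionCongr

theorem insertFixedPoint_self (k : Fin (n + 1)) (τ : Perm (Fin n)) :
    insertFixedPoint k τ k = k := by
  simp [insertFixedPoint]

theorem insertFixedPoint_succAbove (k : Fin (n + 1)) (τ : Perm (Fin n)) (j : Fin n) :
    insertFixedPoint k τ (k.succAbove j) = k.succAbove (τ j) := by
  simp [insertFixedPoint]

theorem insertFixedPoint_injective (k : Fin (n + 1)) : Injective (insertFixedPoint k) :=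
  (Equiv.injective _).comp optionCongr_injective

theorem exists_insertFixedPoint_eq {k : Fin (n + 1)} {σ : Perm (Fin (n + 1))} (hσ : σ k = k) :
    ∃ τ, insertFixedPoint k τ = σ := by
  refine ⟨removeNone ((finSuccEquiv' k).permCongr σ), ?_⟩
  rw [insertFixedPoint, map_equiv_removeNone]
  ext i
  simp [hσ]

theorem isLeast_fixedPoints_insertFixedPoint_iff (k : Fin (n + 1)) (τ : Perm (Fin n)) :
    IsLeast (fixedPoints (insertFixedPoint k τ)) k ↔ ∀ j ∈ fixedPoints τ, k ≤ j.castSucc := by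
  simp only [IsLeast, lowerBounds, Set.mem_ofPred_eq, mem_fixedPoints, IsFixedPt,
    Fin.forall_iff_succAbove k, insertFixedPoint_self, insertFixedPoint_succAbove,
    Fin.succAbove_right_inj, ← Fin.lt_succAbove_iff_le_castSucc,
    (Fin.succAbove_ne k _).symm.le_iff_lt, le_refl, true_and, imp_self]

theorem card_perm_isLeast_fixedPoints (k : Fin (n + 1)) :
    Finset.card {σ : Perm (Fin (n + 1)) | IsLeast (fixedPoints σ) k} =
      Finset.card {τ : Perm (Fin n) | ∀ j ∈ fixedPoints τ, k ≤ j.castSucc} := by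
  rw [← Finset.card_image_of_injective _ (insertFixedPoint_injective k)]
  congr 1
  ext σ
  simp only [Finset.mem_filter_univ, Finset.mem_image]
  constructor
  · intro hσ
    obtain ⟨τ, rfl⟩ := exists_insertFixedPoint_eq hσ.1
    exact ⟨τ, (isLeast_fixedPoints_insertFixedPoint_iff k τ).1 hσ, rfl⟩
  · rintro ⟨τ, hτ, rfl⟩
    exact (isLeast_fixedPoints_insertFixedPoint_iff k τ).2 hτ

end InsertFixedPoint

section IsLeast

variable {α : Type*} [LinearOrder α]

theorem exists_isLeast_of_finite {s : Set α} (hfin : s.Finite) (hs : s.Nonempty) :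
    ∃ a, IsLeast s a :=
  let ⟨a, ha, hmin⟩ := s.exists_min_image id hfin hs
  ⟨a, ha, hmin⟩

theorem card_isLeast [Fintype α] (s : Set α) :
    Finset.card {a | IsLeast s a} = if s.Nonempty then 1 else 0 := by
  split_ifs with hs
  · obtain ⟨a, ha⟩ := exists_isLeast_of_finite s.toFinite hs
    refine Finset.card_eq_one.2 ⟨a, Finset.ext fun c => ?_⟩
    simpa using (⟨fun hc => hc.unique ha, fun hc => hc ▸ ha⟩ : IsLeast s c ↔ c = a)
  · exact Finset.card_eq_zero.2 (Finset.filter_eq_empty_iff.2 fun _ _ ha => hs ha.nonempty)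

end IsLeast

section SmallestFixedPoint

variable {n : ℕ} {π : Perm (Fin n)}

theorem sfp_eq_of_isLeast {i : Fin n} (hi : IsLeast (fixedPoints π) i) : sfp π = i + 1 := by
  have hmono : Monotone fun i : Fin n => (i : ℕ) + 1 := fun _ _ h => Nat.succ_le_succ h
  exact (hmono.map_isLeast hi).csInf_eq

theorem card_lowerBounds_fixedPoints_of_hasFP (hπ : hasFP π) :
    Finset.card {k : Fin (n + 1) | ∀ j ∈ fixedPoints π, k ≤ j.castSucc} = sfp π := by
  obtain ⟨i, hi⟩ := exists_isLeast_of_finite (Set.toFinite (fixedPoints π)) hπ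
  have hIic : ({k | ∀ j ∈ fixedPoints π, k ≤ j.castSucc} : Finset (Fin (n + 1))) =
      Finset.Iic i.castSucc := by
    ext k
    simp only [Finset.mem_filter_univ, Finset.mem_Iic]
    exact ⟨fun hk => hk i hi.1, fun hk j hj => hk.trans (Fin.castSucc_le_castSucc_iff.2 (hi.2 hj))⟩
  rw [hIic, Fin.card_Iic, sfp_eq_of_isLeast hi, Fin.val_castSucc]

theorem card_lowerBounds_fixedPoints_of_not_hasFP (hπ : ¬ hasFP π) :
    Finset.card {k : Fin (n + 1) | ∀ j ∈ fixedPoints π, k ≤ j.castSucc} = n + 1 := by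
  have hempty : fixedPoints π = ∅ := Set.not_nonempty_iff_eq_empty.1 hπ
  simp [hempty]

end SmallestFixedPoint

theorem card_perm_not_hasFP (n : ℕ) :
    Finset.card {π : Perm (Fin n) | ¬ hasFP π} = numDerangements n := by
  rw [← card_derangements_fin_eq_numDerangements, ← Set.toFinset_card]
  congr 1
  ext π
  rw [Finset.mem_filter_univ, Set.mem_toFinset]
  exact not_exists

theorem card_perm_hasFP_add_numDerangements (n : ℕ) :
    Finset.card {π : Perm (Fin n) | hasFP π} + numDerangements n = n.factorial := by
  rw [← card_perm_not_hasFP, Finset.card_filter_add_card_filter_not, Finset.card_univ,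
    Fintype.card_perm, Fintype.card_fin]

theorem card_perm_hasFP_eq_sum_isLeast (n : ℕ) :
    Finset.card {σ : Perm (Fin n) | hasFP σ} =
      ∑ k, Finset.card {σ : Perm (Fin n) | IsLeast (fixedPoints σ) k} := by
  calc
    _ = ∑ σ : Perm (Fin n), if hasFP σ then 1 else 0 := Finset.card_filter _ _
    _ = ∑ σ : Perm (Fin n), Finset.card {k | IsLeast (fixedPoints σ) k} :=
      Finset.sum_congr rfl fun σ _ => (card_isLeast (fixedPoints σ)).symm
    _ = ∑ k, Finset.card {σ : Perm (Fin n) | IsLeast (fixedPoints σ) k} :=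
      Finset.sum_card_bipartiteAbove_eq_sum_card_bipartiteBelow _

theorem card_perm_hasFP_succ (n : ℕ) :
    Finset.card {σ : Perm (Fin (n + 1)) | hasFP σ} = beta n + (n + 1) * numDerangements n := by
  calc
    _ = ∑ k, Finset.card {σ : Perm (Fin (n + 1)) | IsLeast (fixedPoints σ) k} :=
      card_perm_hasFP_eq_sum_isLeast _
    _ = ∑ k : Fin (n + 1),
          Finset.card {τ : Perm (Fin n) | ∀ j ∈ fixedPoints τ, k ≤ j.castSucc} :=
      Finset.sum_congr rfl fun k _ => card_perm_isLeast_fixedPoints k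
    _ = ∑ τ : Perm (Fin n),
          Finset.card {k : Fin (n + 1) | ∀ j ∈ fixedPoints τ, k ≤ j.castSucc} :=
      Finset.sum_card_bipartiteAbove_eq_sum_card_bipartiteBelow _
    _ = (∑ τ : Perm (Fin n) with hasFP τ, sfp τ) + ∑ τ : Perm (Fin n) with ¬ hasFP τ, (n + 1) := by
      rw [← Finset.sum_filter_add_sum_filter_not _ hasFP]
      congr 1 <;> refine Finset.sum_congr rfl fun τ hτ => ?_
      · exact card_lowerBounds_fixedPoints_of_hasFP (Finset.mem_filter.1 hτ).2
      · exact card_lowerBounds_fixedPoints_of_not_hasFP (Finset.mem_filter.1 hτ).2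
    _ = beta n + (n + 1) * numDerangements n := by
      rw [beta, Finset.sum_const, card_perm_not_hasFP, smul_eq_mul, mul_comm]

theorem beta_add_numDerangements (n : ℕ) :
    beta n + (n + 1) * numDerangements n + numDerangements (n + 1) = (n + 1).factorial := by
  rw [← card_perm_hasFP_succ, card_perm_hasFP_add_numDerangements]

theorem beta_div_factorial (K : Type*) [Field K] [CharZero K] (n : ℕ) :
    (beta n : K) / (n + 1).factorial =
      1 - numDerangements n / n.factorial - numDerangements (n + 1) / (n + 1).factorial := by
  have hβ : (beta n : K) + (n + 1) * numDerangements n + numDerangements (n + 1) =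
      (n + 1).factorial := mod_cast beta_add_numDerangements n
  have hfact : ((n + 1).factorial : K) = (n + 1) * n.factorial := mod_cast n.factorial_succ
  have hsucc_ne : (n : K) + 1 ≠ 0 := n.cast_add_one_ne_zero
  have hfact_ne : (n.factorial : K) ≠ 0 := mod_cast n.factorial_ne_zero
  rw [hfact] at hβ ⊢
  field_simp
  linear_combination hβ

theorem stmt14 :
    Filter.Tendsto (fun n : ℕ => (beta n : ℝ) / (n + 1).factorial) Filter.atTop
      (nhds (1 - 2 / Real.exp 1)) := by
  have hd := numDerangements_tendsto_inv_e
  have hd_succ := (Filter.tendsto_add_atTop_iff_nat 1).2 hd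
  have hlim : (1 : ℝ) - 2 / Real.exp 1 = 1 - Real.exp (-1) - Real.exp (-1) := by
    rw [Real.exp_neg]; ring
  simpa only [hlim, beta_div_factorial] using (hd.const_sub 1).sub hd_succ
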